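/- Fix an integer n ≥ 2, θ ∈ (0, π) and ε₁ > 0. There exists ε₂ > 0 depending only on ε₁, θ, n with the following property: for every n×n positive-definite Hermitian complex matrix χ₀, every n×n Hermitian matrix ω with ω ∈ Γ_{χ₀,θ}, and every Hermitian matrix χ with χ₀ ≤ χ ≤ (1 + ε₂)χ₀ (Loewner order), one has ω + 2ε₁χ ∈ Γ_{χ,θ}. -/

import Mathlib

open Real Matrix
open scoped ComplexOrder Classical

/-- The arccotangent with range `(0, π)`. -/
noncomputable def arccot (x : ℝ) : ℝ := π / 2 - Real.arctan x

open scoped MatrixOrder in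
/-- The eigenvalues of `ω` with respect to a positive-definite Hermitian `χ`: the (real)
eigenvalues of the Hermitian matrix `χ^{-1/2} * ω * χ^{-1/2}`, where `χ^{1/2}` is the
positive-definite square root of `χ` (junk value `0` if the side conditions fail). -/
noncomputable def eigsWrt {n : ℕ} (χ ω : Matrix (Fin n) (Fin n) ℂ) : Fin n → ℝ :=
  if hχ : χ.PosDef then
    if hM : (((CFC.sqrt χ)⁻¹ : Matrix (Fin n) (Fin n) ℂ) * ω
        * ((CFC.sqrt χ)⁻¹ : Matrix (Fin n) (Fin n) ℂ)).IsHermitian then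
      hM.eigenvalues
    else 0
  else 0

/-- `ω ∈ Γ_{χ,θ}` : the sum of `arccot` of any `n − 1` eigenvalues of `ω` with respect to `χ`
is less than `θ`. -/
def memGamma {n : ℕ} (χ ω : Matrix (Fin n) (Fin n) ℂ) (θ : ℝ) : Prop :=
  ∀ I : Finset (Fin n), I.card = n - 1 → ∑ i ∈ I, arccot (eigsWrt χ ω i) < θ

/-- `A ≤ B` in the Loewner order: `B − A` is positive semidefinite. -/
def loewnerLE {n : ℕ} (A B : Matrix (Fin n) (Fin n) ℂ) : Prop := (B - A).PosSemidef

/-!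
Eigenvalues with respect to `χ` obey the Courant–Fischer max-min principle, so enlarging `χ` by a
factor of at most `1 + ε₂` moves an eigenvalue `λ ≤ K` down by at most `ε₂ K`, and leaves those
above `K` above `K - ε₂ K`. With `ε₂ = ε₁ / K`, the eigenvalues of `ω + 2ε₁χ` are therefore at
least `min(λ, K) + ε₁`.

Truncation at `K` raises each `arccot` by at most `arccot K`, which is as small as we like. The
shift by `ε₁` makes up for it: if some `λ` lies below a fixed level `L`, then it lies in the compact
interval `[cot θ, L]`, where the shift lowers `arccot` by a definite amount; otherwise all the
`arccot`s are already small.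
-/

open Filter Module Submodule Topology

lemma finrank_span_image_finset {R M ι : Type*} [Ring R] [Nontrivial R] [StrongRankCondition R]
    [AddCommGroup M] [Module R M] {b : ι → M} (hb : LinearIndependent R b) (s : Finset ι) :
    finrank R (span R (b '' s)) = s.card := by
  have himage : b '' s = Set.range (b ∘ ((↑) : s → ι)) := by simp [Set.range_comp]
  rw [himage, finrank_span_eq_card (hb.comp _ Subtype.val_injective), Fintype.card_coe]

section MaxMin

open scoped InnerProductSpace

variable {𝕜 E ι : Type*} [RCLike 𝕜] [NormedAddCommGroup E] [InnerProductSpace 𝕜 E]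
  {T : E →ₗ[𝕜] E} [Fintype ι] {c : ℝ} {x : E}
  {b : OrthonormalBasis ι 𝕜 E} {μ : ι → ℝ} {s : Set ι}

lemma re_inner_apply_self_eq_sum (hb : ∀ i, T (b i) = (μ i : 𝕜) • b i) (x : E) :
    RCLike.re ⟪x, T x⟫_𝕜 = ∑ i, μ i * ‖⟪b i, x⟫_𝕜‖ ^ 2 := by
  have hTx : T x = ∑ i, (⟪b i, x⟫_𝕜 * μ i) • b i := by
    conv_lhs => rw [← b.sum_repr' x]
    simp only [map_sum, map_smul, hb, smul_smul]
  rw [hTx, inner_sum, map_sum]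
  refine Finset.sum_congr rfl fun i _ => ?_
  rw [inner_smul_right, mul_right_comm, mul_comm, RCLike.re_ofReal_mul, inner_mul_symm_re_eq_norm,
    norm_mul, norm_inner_symm x, sq]

lemma inner_eq_zero_of_mem_span_image (hx : x ∈ span 𝕜 (b '' s)) {i : ι} (hi : i ∉ s) :
    ⟪b i, x⟫_𝕜 = 0 := by
  rw [← b.coe_toBasis, b.toBasis.mem_span_image] at hx
  simpa [b.repr_apply_apply] using mt (@hx i) hi

lemma mul_norm_sq_le_re_inner_of_mem_span (hb : ∀ i, T (b i) = (μ i : 𝕜) • b i)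
    (hμ : ∀ i ∈ s, c ≤ μ i) (hx : x ∈ span 𝕜 (b '' s)) :
    c * ‖x‖ ^ 2 ≤ RCLike.re ⟪x, T x⟫_𝕜 := by
  rw [re_inner_apply_self_eq_sum hb, ← b.sum_sq_norm_inner_right, Finset.mul_sum]
  refine Finset.sum_le_sum fun i _ => ?_
  by_cases hi : i ∈ s
  · gcongr
    exact hμ i hi
  · simp [inner_eq_zero_of_mem_span_image hx hi]

lemma re_inner_le_mul_norm_sq_of_mem_span (hb : ∀ i, T (b i) = (μ i : 𝕜) • b i)
    (hμ : ∀ i ∈ s, μ i ≤ c) (hx : x ∈ span 𝕜 (b '' s)) :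
    RCLike.re ⟪x, T x⟫_𝕜 ≤ c * ‖x‖ ^ 2 := by
  have hneg := mul_norm_sq_le_re_inner_of_mem_span (T := -T) (μ := -μ) (c := -c)
    (by simp [hb]) (by simpa using hμ) hx
  simpa using hneg

theorem le_eigenvalues_iff_exists_submodule [FiniteDimensional 𝕜 E] (hT : T.IsSymmetric) {n : ℕ}
    (hn : finrank 𝕜 E = n) (k : Fin n) :
    c ≤ hT.eigenvalues hn k ↔ ∃ V : Submodule 𝕜 E, (k : ℕ) < finrank 𝕜 V ∧
      ∀ x ∈ V, c * ‖x‖ ^ 2 ≤ RCLike.re ⟪x, T x⟫_𝕜 := by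
  set b := hT.eigenvectorBasis hn
  have hb : ∀ i, T (b i) = (hT.eigenvalues hn i : 𝕜) • b i := hT.apply_eigenvectorBasis hn
  have hspan := finrank_span_image_finset b.toBasis.linearIndependent
  rw [b.coe_toBasis] at hspan
  constructor
  · refine fun hc => ⟨span 𝕜 (b '' Finset.Iic k), by simp [hspan], fun x hx => ?_⟩
    refine mul_norm_sq_le_re_inner_of_mem_span hb (fun i hi => hc.trans ?_) hx
    exact hT.eigenvalues_antitone hn (by simpa using hi)
  · rintro ⟨V, hkV, hV⟩
    set W := span 𝕜 (b '' Finset.Ici k)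
    have hVW : ¬ Disjoint V W := fun hdisj => by
      have hdim := finrank_add_finrank_le_of_disjoint hdisj
      rw [hspan, Fin.card_Ici] at hdim
      omega
    obtain ⟨x, hx, hx0⟩ := (Submodule.ne_bot_iff _).1 (mt disjoint_iff.2 hVW)
    obtain ⟨hxV, hxW⟩ := Submodule.mem_inf.1 hx
    have hupper := re_inner_le_mul_norm_sq_of_mem_span hb
      (fun i hi => hT.eigenvalues_antitone hn (by simpa using hi)) hxW
    have hpos : 0 < ‖x‖ ^ 2 := by positivity
    exact le_of_mul_le_mul_right ((hV x hxV).trans hupper) hpos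

end MaxMin

lemma exists_submodule_comp_iff {K U W : Type*} [Semiring K] [AddCommMonoid U] [Module K U]
    [AddCommMonoid W] [Module K W] (e : U ≃ₗ[K] W) (d : ℕ) (p : W → Prop) :
    (∃ V : Submodule K U, d < finrank K V ∧ ∀ x ∈ V, p (e x)) ↔
      ∃ V : Submodule K W, d < finrank K V ∧ ∀ x ∈ V, p x := by
  constructor
  · rintro ⟨V, hd, hV⟩
    refine ⟨V.map (e : U →ₗ[K] W), by rwa [e.finrank_map_eq], ?_⟩
    rintro _ ⟨x, hx, rfl⟩
    exact hV x hx
  · rintro ⟨V, hd, hV⟩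
    refine ⟨V.map (e.symm : W →ₗ[K] U), by rwa [e.symm.finrank_map_eq], ?_⟩
    rintro _ ⟨x, hx, rfl⟩
    simpa using hV x hx

section HermitianForm

variable {𝕜 ι : Type*} [RCLike 𝕜] [Fintype ι]

/-- The real part of the sesquilinear form `x⋆ A x`. It is bundled as a linear map in the matrix
`A`, because forms of different matrices are compared at the same vector. -/
noncomputable def hermForm (x : ι → 𝕜) : Matrix ι ι 𝕜 →ₗ[ℝ] ℝ where
  toFun A := RCLike.re (star x ⬝ᵥ A *ᵥ x)
  map_add' A B := by simp [add_mulVec]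
  map_smul' r A := by simp [smul_mulVec, RCLike.smul_re]

lemma hermForm_apply (x : ι → 𝕜) (A : Matrix ι ι 𝕜) :
    hermForm x A = RCLike.re (star x ⬝ᵥ A *ᵥ x) := rfl

lemma hermForm_conjTranspose_mul_mul (P A : Matrix ι ι 𝕜) (x : ι → 𝕜) :
    hermForm x (Pᴴ * A * P) = hermForm (P *ᵥ x) A := by
  rw [hermForm_apply, hermForm_apply, star_mulVec, ← dotProduct_mulVec, mulVec_mulVec,
    mulVec_mulVec, mul_assoc]

lemma hermForm_eq_re_inner [DecidableEq ι] (x : ι → 𝕜) (A : Matrix ι ι 𝕜) :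
    hermForm x A = RCLike.re (inner 𝕜 (WithLp.toLp 2 x) (toEuclideanLin A (WithLp.toLp 2 x))) := by
  rw [hermForm_apply, dotProduct_comm]
  rfl

lemma hermForm_one [DecidableEq ι] (x : ι → 𝕜) : hermForm x 1 = ‖WithLp.toLp 2 x‖ ^ 2 := by
  rw [hermForm_eq_re_inner, norm_sq_eq_re_inner (𝕜 := 𝕜)]
  simp

lemma exists_submodule_conj_iff [DecidableEq ι] {P : Matrix ι ι 𝕜} (hP : IsUnit P)
    (A B : Matrix ι ι 𝕜) (c : ℝ) (d : ℕ) :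
    (∃ V : Submodule 𝕜 (ι → 𝕜), d < finrank 𝕜 V ∧
      ∀ x ∈ V, c * hermForm x (Pᴴ * A * P) ≤ hermForm x (Pᴴ * B * P)) ↔
    ∃ V : Submodule 𝕜 (ι → 𝕜), d < finrank 𝕜 V ∧
      ∀ x ∈ V, c * hermForm x A ≤ hermForm x B := by
  simp only [hermForm_conjTranspose_mul_mul]
  exact exists_submodule_comp_iff (P.toLinearEquiv' hP.invertible) d
    fun x => c * hermForm x A ≤ hermForm x B

/-- The position of `i` in the decreasing order of the eigenvalues `hA.eigenvalues` of a Hermitian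
matrix `A`, counted from `0`. -/
noncomputable def eigenvalueRank (i : ι) : ℕ :=
  ((Fintype.equivOfCardEq (Fintype.card_fin _)).symm i : Fin (Fintype.card ι))

lemma le_matrix_eigenvalues_iff_exists_submodule [DecidableEq ι] {A : Matrix ι ι 𝕜}
    (hA : A.IsHermitian) (c : ℝ) (i : ι) :
    c ≤ hA.eigenvalues i ↔ ∃ V : Submodule 𝕜 (ι → 𝕜), eigenvalueRank i < finrank 𝕜 V ∧
      ∀ x ∈ V, c * hermForm x 1 ≤ hermForm x A := by
  rw [IsHermitian.eigenvalues, IsHermitian.eigenvalues₀, le_eigenvalues_iff_exists_submodule,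
    ← exists_submodule_comp_iff (WithLp.linearEquiv 2 𝕜 (ι → 𝕜)).symm]
  simp_rw [hermForm_one, hermForm_eq_re_inner]
  rfl

end HermitianForm

section RelativeEigenvalues

variable {n : ℕ} {χ ω : Matrix (Fin n) (Fin n) ℂ}

open scoped MatrixOrder in
lemma exists_eigsWrt_eq_eigenvalues (hχ : χ.PosDef) (hω : ω.IsHermitian) :
    ∃ P : Matrix (Fin n) (Fin n) ℂ, P.IsHermitian ∧ IsUnit P ∧ P * χ * P = 1 ∧
      ∃ hM : (P * ω * P).IsHermitian, eigsWrt χ ω = hM.eigenvalues := by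
  set S := CFC.sqrt χ
  have hSS : S * S = χ := CFC.sqrt_mul_sqrt_self χ hχ.posSemidef.nonneg
  have hS : IsUnit S := (CFC.isUnit_sqrt_iff χ hχ.posSemidef.nonneg).2 hχ.isUnit
  have hdet : IsUnit S.det := S.isUnit_iff_isUnit_det.1 hS
  have hinv : (S⁻¹).IsHermitian := (CFC.sqrt_nonneg χ).posSemidef.isHermitian.inv
  have hM : (S⁻¹ * ω * S⁻¹).IsHermitian := by
    simpa only [hinv.eq] using isHermitian_conjTranspose_mul_mul S⁻¹ hω
  refine ⟨S⁻¹, hinv, isUnit_nonsing_inv_iff.2 hS, ?_, hM, ?_⟩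
  · rw [← hSS, nonsing_inv_mul_cancel_left _ _ hdet, mul_nonsing_inv _ hdet]
  · rw [eigsWrt, dif_pos hχ, dif_pos hM]

lemma le_eigsWrt_iff_exists_submodule (hχ : χ.PosDef) (hω : ω.IsHermitian) (c : ℝ) (i : Fin n) :
    c ≤ eigsWrt χ ω i ↔ ∃ V : Submodule ℂ (Fin n → ℂ), eigenvalueRank i < finrank ℂ V ∧
      ∀ x ∈ V, c * hermForm x χ ≤ hermForm x ω := by
  obtain ⟨P, hP, hPunit, hPχ, hM, heigs⟩ := exists_eigsWrt_eq_eigenvalues hχ hω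
  rw [heigs, le_matrix_eigenvalues_iff_exists_submodule, ← exists_submodule_conj_iff hPunit χ ω,
    hP.eq, hPχ]

lemma eigsWrt_add_smul (hχ : χ.PosDef) (hω : ω.IsHermitian) (t : ℝ) (i : Fin n) :
    eigsWrt χ (ω + t • χ) i = eigsWrt χ ω i + t := by
  have hωt : (ω + t • χ).IsHermitian := hω.add (hχ.isHermitian.smul (IsSelfAdjoint.all t))
  refine eq_of_forall_le_iff fun c => ?_
  rw [← sub_le_iff_le_add, le_eigsWrt_iff_exists_submodule hχ hωt,
    le_eigsWrt_iff_exists_submodule hχ hω]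
  simp only [map_add, map_smul, smul_eq_mul, sub_mul, sub_le_iff_le_add]

lemma hermForm_le_of_loewnerLE {A B : Matrix (Fin n) (Fin n) ℂ} (h : loewnerLE A B)
    (x : Fin n → ℂ) : hermForm x A ≤ hermForm x B := by
  rw [← sub_nonneg, ← map_sub]
  exact h.re_dotProduct_nonneg x

lemma posDef_of_loewnerLE {A B : Matrix (Fin n) (Fin n) ℂ} (hA : A.PosDef) (h : loewnerLE A B) :
    B.PosDef := by
  simpa using hA.add_posSemidef h

lemma min_sub_le_eigsWrt {χ₀ : Matrix (Fin n) (Fin n) ℂ} {ε K : ℝ} (hε : 0 ≤ ε) (hK : 0 ≤ K)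
    (hχ₀ : χ₀.PosDef) (hω : ω.IsHermitian) (hle : loewnerLE χ₀ χ)
    (hge : loewnerLE χ ((1 + ε) • χ₀)) (i : Fin n) :
    min (eigsWrt χ₀ ω i) K - ε * K ≤ eigsWrt χ ω i := by
  have hχ : χ.PosDef := posDef_of_loewnerLE hχ₀ hle
  obtain ⟨V, hdim, hV⟩ := (le_eigsWrt_iff_exists_submodule hχ₀ hω _ i).1 le_rfl
  refine (le_eigsWrt_iff_exists_submodule hχ hω _ i).2 ⟨V, hdim, fun x hx => ?_⟩
  have hxle := hermForm_le_of_loewnerLE hle x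
  have hxge := hermForm_le_of_loewnerLE hge x
  rw [map_smul, smul_eq_mul] at hxge
  set m := min (eigsWrt χ₀ ω i) K
  have hloss : m * (hermForm x χ - hermForm x χ₀) ≤ ε * K * hermForm x χ :=
    calc m * (hermForm x χ - hermForm x χ₀) ≤ K * (hermForm x χ - hermForm x χ₀) :=
          mul_le_mul_of_nonneg_right (min_le_right _ _) (sub_nonneg.2 hxle)
      _ ≤ K * (ε * hermForm x χ₀) := by
          gcongr
          linarith
      _ ≤ K * (ε * hermForm x χ) := by gcongr
      _ = ε * K * hermForm x χ := by ring
  calc (m - ε * K) * hermForm x χ ≤ m * hermForm x χ₀ := by linarith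
    _ ≤ eigsWrt χ₀ ω i * hermForm x χ₀ :=
        mul_le_mul_of_nonneg_right (min_le_left _ _) (hχ₀.posSemidef.re_dotProduct_nonneg x)
    _ ≤ hermForm x ω := hV x hx

end RelativeEigenvalues

section DecayingSums

variable {f : ℝ → ℝ}

lemma exists_forall_add_le_of_strictAnti (hf : Continuous f) (hanti : StrictAnti f) (a L : ℝ)
    {δ : ℝ} (hδ : 0 < δ) : ∃ c > 0, ∀ x ∈ Set.Icc a L, f (x + δ) + c ≤ f x := by
  have hcont : ContinuousOn (fun x => f x - f (x + δ)) (Set.Icc a L) := by fun_prop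
  obtain ⟨c, hc, hgain⟩ := isCompact_Icc.exists_forall_le' hcont (a := 0) fun x _ =>
    sub_pos.2 (hanti (lt_add_of_pos_right x hδ))
  exact ⟨c, hc, fun x hx => by linarith [hgain x hx]⟩

lemma sum_add_le_sum_add_mul {ι : Type*} {s : Finset ι} {n : ℕ} (hs : s.card ≤ n) {u v : ι → ℝ}
    {c η : ℝ} (hη : 0 ≤ η) (hloss : ∀ j ∈ s, u j ≤ v j + η) {i : ι} (hi : i ∈ s)
    (hgain : u i + c ≤ v i) : ∑ j ∈ s, u j + c ≤ ∑ j ∈ s, v j + n * η := by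
  have hcard : ((s.erase i).card : ℝ) ≤ n := mod_cast Finset.card_erase_le.trans hs
  have hrest : ∑ j ∈ s.erase i, u j ≤ ∑ j ∈ s.erase i, v j + n * η :=
    calc ∑ j ∈ s.erase i, u j ≤ ∑ j ∈ s.erase i, (v j + η) :=
          Finset.sum_le_sum fun j hj => hloss j (Finset.mem_of_mem_erase hj)
      _ = ∑ j ∈ s.erase i, v j + (s.erase i).card * η := by simp [Finset.sum_add_distrib]
      _ ≤ ∑ j ∈ s.erase i, v j + n * η := by gcongr
  linarith [Finset.add_sum_erase s u hi, Finset.add_sum_erase s v hi]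

lemma eventually_mul_lt_of_tendsto_zero (hlim : Tendsto f atTop (𝓝 0)) (n : ℕ) {r : ℝ}
    (hr : 0 < r) : ∀ᶠ x in atTop, n * f x < r := by
  have hlim' : Tendsto (fun x => n * f x) atTop (𝓝 0) := by simpa using hlim.const_mul (n : ℝ)
  exact hlim'.eventually_lt_const hr

lemma apply_min_le_add (hanti : Antitone f) (hnonneg : ∀ x, 0 ≤ f x) (x y : ℝ) :
    f (min x y) ≤ f x + f y := by
  rw [hanti.map_min]
  exact max_le_add_of_nonneg (hnonneg x) (hnonneg y)

theorem exists_forall_sum_lt_of_min_add_le (ι : Type*) (hf : Continuous f)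
    (hanti : StrictAnti f) (hlim : Tendsto f atTop (𝓝 0)) (n : ℕ) (a : ℝ) {θ δ : ℝ} (hθ : 0 < θ)
    (hδ : 0 < δ) : ∃ K > 0, ∀ (s : Finset ι) (l l' : ι → ℝ), s.card ≤ n → (∀ i ∈ s, a ≤ l i) →
      (∀ i ∈ s, min (l i) K + δ ≤ l' i) → ∑ i ∈ s, f (l i) < θ → ∑ i ∈ s, f (l' i) < θ := by
  have hnonneg : ∀ x, 0 ≤ f x := hanti.antitone.le_of_tendsto hlim
  obtain ⟨L, hL⟩ := (eventually_mul_lt_of_tendsto_zero hlim n hθ).exists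
  obtain ⟨c, hc, hgain⟩ := exists_forall_add_le_of_strictAnti hf hanti a L hδ
  obtain ⟨K, hKc, hLK, hK⟩ := ((eventually_mul_lt_of_tendsto_zero hlim n hc).and
    ((eventually_ge_atTop L).and (eventually_gt_atTop 0))).exists
  refine ⟨K, hK, fun s l l' hs ha hl' hsum => ?_⟩
  by_cases hlarge : ∀ i ∈ s, L ≤ l i
  · have hterm : ∀ i ∈ s, f (l' i) ≤ f L := fun i hi =>
      hanti.antitone (by linarith [hl' i hi, le_min (hlarge i hi) hLK])
    calc ∑ i ∈ s, f (l' i) ≤ s.card * f L := by simpa using Finset.sum_le_card_nsmul s _ _ hterm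
      _ ≤ n * f L := by gcongr; exact hnonneg L
      _ < θ := hL
  · push Not at hlarge
    obtain ⟨i, hi, hiL⟩ := hlarge
    have hloss : ∀ j ∈ s, f (l' j) ≤ f (l j) + f K := fun j hj =>
      (hanti.antitone (by linarith [hl' j hj])).trans
        (apply_min_le_add hanti.antitone hnonneg (l j) K)
    have hgain_i : f (l' i) + c ≤ f (l i) := by
      have hshift : l i + δ ≤ l' i := by
        simpa only [min_eq_left (hiL.le.trans hLK)] using hl' i hi
      linarith [hanti.antitone hshift, hgain (l i) ⟨ha i hi, hiL.le⟩]
    linarith [sum_add_le_sum_add_mul hs (hnonneg K) hloss hi hgain_i]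

end DecayingSums

section Arccot

lemma arccot_strictAnti : StrictAnti arccot := fun _ _ h =>
  sub_lt_sub_left (arctan_strictMono h) _

lemma continuous_arccot : Continuous arccot :=
  continuous_const.sub continuous_arctan

lemma tendsto_arccot_atTop : Tendsto arccot atTop (𝓝 0) := by
  rw [← sub_self (π / 2)]
  exact (tendsto_arctan_atTop.mono_right nhdsWithin_le_nhds).const_sub (π / 2)

lemma arccot_pos (x : ℝ) : 0 < arccot x :=
  sub_pos.2 (arctan_lt_pi_div_two x)

lemma arccot_tan_pi_div_two_sub {θ : ℝ} (hθ : θ ∈ Set.Ioo 0 π) : arccot (tan (π / 2 - θ)) = θ := by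
  rw [arccot, arctan_tan (by linarith [hθ.2]) (by linarith [hθ.1]), sub_sub_cancel]

lemma tan_lt_of_sum_arccot_lt {ι : Type*} {s : Finset ι} {l : ι → ℝ} {θ : ℝ}
    (hθ : θ ∈ Set.Ioo 0 π) (hsum : ∑ i ∈ s, arccot (l i) < θ) {i : ι} (hi : i ∈ s) :
    tan (π / 2 - θ) < l i := by
  rw [← arccot_strictAnti.lt_iff_gt, arccot_tan_pi_div_two_sub hθ]
  exact (Finset.single_le_sum (fun j _ => (arccot_pos (l j)).le) hi).trans_lt hsum

end Arccot

/-- Fix `n ≥ 2`, `θ ∈ (0, π)` and `ε₁ > 0`. There exists `ε₂ > 0`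
(depending only on `ε₁, θ, n`) such that for every positive-definite Hermitian `χ₀`,
every Hermitian `ω ∈ Γ_{χ₀,θ}` and every Hermitian `χ` with
`χ₀ ≤ χ ≤ (1 + ε₂) χ₀` (Loewner order), one has `ω + 2ε₁χ ∈ Γ_{χ,θ}`. -/
theorem perturb_cone (n : ℕ) (hn : 2 ≤ n) (θ : ℝ) (hθ : θ ∈ Set.Ioo 0 π)
    (ε₁ : ℝ) (hε₁ : 0 < ε₁) :
    ∃ ε₂ > 0, ∀ χ₀ ω χ : Matrix (Fin n) (Fin n) ℂ,
      χ₀.PosDef → ω.IsHermitian → χ.IsHermitian →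
      loewnerLE χ₀ χ → loewnerLE χ ((1 + ε₂ : ℝ) • χ₀) →
      memGamma χ₀ ω θ →
      memGamma χ (ω + (2 * ε₁ : ℝ) • χ) θ := by
  obtain ⟨K, hK, htrunc⟩ := exists_forall_sum_lt_of_min_add_le (Fin n) continuous_arccot
    arccot_strictAnti tendsto_arccot_atTop n (tan (π / 2 - θ)) hθ.1 hε₁
  refine ⟨ε₁ / K, by positivity, fun χ₀ ω χ hχ₀ hω _ hle hge hmem I hI => ?_⟩
  refine htrunc I (eigsWrt χ₀ ω) _ (by omega)
    (fun i hi => (tan_lt_of_sum_arccot_lt hθ (hmem I hI) hi).le) (fun i _ => ?_) (hmem I hI)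
  have hlower := min_sub_le_eigsWrt (by positivity) hK.le hχ₀ hω hle hge i
  rw [div_mul_cancel₀ _ hK.ne'] at hlower
  rw [eigsWrt_add_smul (posDef_of_loewnerLE hχ₀ hle) hω]
  linarith
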